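/- Let n ≥ 2 and let P be a finite-volume non-compact right-angled convex hyperbolic n-polyhedron. Let v′_∞(P) be the minimum, over all facets F of P, of the number of ideal vertices of F. Then 2(n − 1) · v_∞(P) ≥ a_{n−1}(P) · v′_∞(P); equivalently v_∞(P) ≥ a_{n−1}(P) · v′_∞(P) / (2(n − 1)). -/

import Mathlib

open scoped BigOperators

noncomputable section

/-- The Minkowski bilinear form `⟨x,y⟩ = -x₀y₀ + x₁y₁ + ⋯ + xₙyₙ` on `ℝ^{n+1}`. -/
def mink {n : ℕ} (x y : Fin (n + 1) → ℝ) : ℝ :=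
  -(x 0 * y 0) + ∑ i : Fin n, x i.succ * y i.succ

/-- The hyperboloid model of the hyperbolic space `ℍⁿ`. -/
def Hyperboloid (n : ℕ) : Set (Fin (n + 1) → ℝ) :=
  {x | mink x x = -1 ∧ 0 < x 0}

/-- The Klein projection `x ↦ (x₁/x₀, …, xₙ/x₀)` of the hyperboloid onto the unit ball. -/
def kleinMap {n : ℕ} (x : Fin (n + 1) → ℝ) : EuclideanSpace ℝ (Fin n) :=
  WithLp.toLp 2 fun i => x i.succ / x 0

/-- Dimension of a subset of a real vector space: the rank of its vector span. -/
def sdim {n : ℕ} (s : Set (EuclideanSpace ℝ (Fin n))) : ℕ :=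
  Module.finrank ℝ (vectorSpan ℝ s)

/-- A convex hyperbolic `n`-polyhedron: a finite intersection of hyperbolic half-spaces
`H_{eᵢ}⁻ = {x : ⟨eᵢ,x⟩ ≤ 0}` (with `⟨eᵢ,eᵢ⟩ = 1`) having nonempty interior
(equivalently, its Klein-model image has nonempty interior in `ℝⁿ`). -/
structure HypPolyhedron (n : ℕ) where
  m : ℕ
  e : Fin m → (Fin (n + 1) → ℝ)
  unit : ∀ i, mink (e i) (e i) = 1
  nonempty_int :
    (interior (kleinMap '' {x ∈ Hyperboloid n | ∀ i, mink (e i) x ≤ 0})).Nonempty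

namespace HypPolyhedron

variable {n : ℕ} (P : HypPolyhedron n)

/-- The set of points of the polyhedron in the hyperboloid model. -/
def carrier : Set (Fin (n + 1) → ℝ) :=
  {x ∈ Hyperboloid n | ∀ i, mink (P.e i) x ≤ 0}

/-- `P̄`: the closure of the Klein-model image of the polyhedron in the closed unit ball. -/
def cl : Set (EuclideanSpace ℝ (Fin n)) :=
  closure (kleinMap '' P.carrier)

/-- The `k`-faces of `P`: the `k`-dimensional (nonempty) exposed faces of `P̄`. -/
def faces (k : ℕ) : Set (Set (EuclideanSpace ℝ (Fin n))) :=
  {F | IsExposed ℝ P.cl F ∧ F.Nonempty ∧ sdim F = k}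

/-- `a_k(P)`: the number of `k`-faces of `P`. -/
def a (k : ℕ) : ℕ := (P.faces k).ncard

/-- Vertices of `P`: the points of `0`-dimensional exposed faces of `P̄`. -/
def verts : Set (EuclideanSpace ℝ (Fin n)) :=
  {v | IsExposed ℝ P.cl {v}}

/-- Ideal vertices: vertices lying on the unit sphere. -/
def idealVerts : Set (EuclideanSpace ℝ (Fin n)) :=
  {v ∈ P.verts | ‖v‖ = 1}

/-- Finite vertices: vertices lying in the open unit ball. -/
def finiteVerts : Set (EuclideanSpace ℝ (Fin n)) :=
  {v ∈ P.verts | ‖v‖ < 1}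

/-- `v_∞(P)`: the number of ideal vertices of `P`. -/
def vInf : ℕ := P.idealVerts.ncard

/-- The bounding hyperplane `H_e` contains the face `F`. -/
def faceInHyperplane (e : Fin (n + 1) → ℝ) (F : Set (EuclideanSpace ℝ (Fin n))) : Prop :=
  ∀ x ∈ P.carrier, kleinMap x ∈ F → mink e x = 0

/-- `P` is right-angled: whenever two distinct bounding hyperplanes both contain an
`(n-2)`-dimensional face of `P`, the corresponding unit normals are orthogonal,
i.e. the dihedral angle is `π/2`. -/
def IsRightAngled : Prop :=
  ∀ i j : Fin P.m, i ≠ j →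
    (∃ F ∈ P.faces (n - 2), P.faceInHyperplane (P.e i) F ∧ P.faceInHyperplane (P.e j) F) →
    mink (P.e i) (P.e j) = 0

/-- `P` has finite volume: `P̄` is the convex hull of its (finitely many) vertices. -/
def FiniteVolume : Prop :=
  P.verts.Finite ∧ P.cl = convexHull ℝ P.verts

/-- `P` is compact: finite volume and all vertices are finite. -/
def IsCompactPoly : Prop :=
  P.FiniteVolume ∧ ∀ v ∈ P.verts, ‖v‖ < 1

/-- `P` is ideal: finite volume and all vertices are ideal. -/
def IsIdeal : Prop :=
  P.FiniteVolume ∧ ∀ v ∈ P.verts, ‖v‖ = 1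

end HypPolyhedron

/-- `ν(P) = a_{n-1}(P) + v_∞(P)` ranging over the family `𝒫ⁿ` of finite-volume non-compact
right-angled convex hyperbolic `n`-polyhedra. -/
def nuSet (n : ℕ) : Set ℕ :=
  {m | ∃ P : HypPolyhedron n,
        P.FiniteVolume ∧ P.IsRightAngled ∧ ¬ P.IsCompactPoly ∧ P.a (n - 1) + P.vInf = m}

/-- `νₙ = sInf {ν(P) : P ∈ 𝒫ⁿ}` (with `sInf ∅ = 0`). -/
def nu (n : ℕ) : ℕ := sInf (nuSet n)

open scoped RealInnerProductSpace

/-- The spatial part `(x₁, …, xₙ)` of a vector of `ℝ^{n+1}`. -/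
def spatial {n : ℕ} (x : Fin (n + 1) → ℝ) : EuclideanSpace ℝ (Fin n) :=
  WithLp.toLp 2 fun i => x i.succ

/-- The affine function `p ↦ ⟨e, (1, p)⟩` on the Klein chart. -/
def height {n : ℕ} (e : Fin (n + 1) → ℝ) (p : EuclideanSpace ℝ (Fin n)) : ℝ :=
  ⟪spatial e, p⟫ - e 0

section Chart

variable {n : ℕ}

theorem mink_eq_inner_spatial (x y : Fin (n + 1) → ℝ) :
    mink x y = ⟪spatial x, spatial y⟫ - x 0 * y 0 := by
  simp only [mink, spatial, PiLp.inner_apply, RCLike.inner_apply, conj_trivial]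
  rw [neg_add_eq_sub]
  simp only [mul_comm]

theorem kleinMap_eq_smul (x : Fin (n + 1) → ℝ) : kleinMap x = (x 0)⁻¹ • spatial x := by
  ext i
  simp [kleinMap, spatial, div_eq_inv_mul]

theorem mink_eq_mul_height (e x : Fin (n + 1) → ℝ) (hx : x 0 ≠ 0) :
    mink e x = x 0 * height e (kleinMap x) := by
  rw [mink_eq_inner_spatial, height, kleinMap_eq_smul, real_inner_smul_right]
  field_simp

theorem spatial_ne_zero {e : Fin (n + 1) → ℝ} (he : mink e e = 1) : spatial e ≠ 0 := by
  intro h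
  rw [mink_eq_inner_spatial, h, inner_zero_left] at he
  nlinarith [mul_self_nonneg (e 0)]

@[fun_prop]
theorem continuous_height (e : Fin (n + 1) → ℝ) : Continuous (height e) := by
  unfold height
  fun_prop

theorem height_combo (e : Fin (n + 1) → ℝ) (x y : EuclideanSpace ℝ (Fin n)) (t : ℝ) :
    height e ((1 - t) • x + t • y) = (1 - t) * height e x + t * height e y := by
  simp only [height, inner_add_right, real_inner_smul_right]
  ring

theorem height_add (e : Fin (n + 1) → ℝ) (x d : EuclideanSpace ℝ (Fin n)) :
    height e (x + d) = height e x + ⟪spatial e, d⟫ := by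
  simp only [height, inner_add_right]
  ring

theorem height_sub_height (e : Fin (n + 1) → ℝ) (x y : EuclideanSpace ℝ (Fin n)) :
    ⟪spatial e, x - y⟫ = height e x - height e y := by
  simp only [height, inner_sub_right]
  ring

theorem norm_kleinMap_lt_one {x : Fin (n + 1) → ℝ} (hx : mink x x < 0) (h0 : 0 < x 0) :
    ‖kleinMap x‖ < 1 := by
  rw [mink_eq_inner_spatial, real_inner_self_eq_norm_sq] at hx
  rw [kleinMap_eq_smul, norm_smul, norm_inv, Real.norm_of_nonneg h0.le, inv_mul_lt_one₀ h0]
  nlinarith [norm_nonneg (spatial x)]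

/-- Every point of the open unit ball is the Klein image of a point of the hyperboloid. -/
theorem exists_kleinMap_eq {p : EuclideanSpace ℝ (Fin n)} (hp : ‖p‖ < 1) :
    ∃ x ∈ Hyperboloid n, kleinMap x = p := by
  have hpos : 0 < 1 - ‖p‖ ^ 2 := by nlinarith [norm_nonneg p]
  set c : ℝ := (√(1 - ‖p‖ ^ 2))⁻¹ with hc
  have hc0 : 0 < c := inv_pos.2 (Real.sqrt_pos.2 hpos)
  have hc2 : c ^ 2 * (1 - ‖p‖ ^ 2) = 1 := by
    rw [hc, inv_pow, Real.sq_sqrt hpos.le, inv_mul_cancel₀ hpos.ne']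
  have hs : spatial (Fin.cons c fun i => c * p i) = c • p := by
    ext i
    simp [spatial]
  refine ⟨Fin.cons c fun i => c * p i, ⟨?_, by simpa using hc0⟩, ?_⟩
  · rw [mink_eq_inner_spatial, hs, real_inner_smul_left, real_inner_smul_right,
      real_inner_self_eq_norm_sq]
    simp only [Fin.cons_zero]
    linarith
  · rw [kleinMap_eq_smul, hs, Fin.cons_zero, smul_smul, inv_mul_cancel₀ hc0.ne', one_smul]

theorem norm_combo_lt_one {x y : EuclideanSpace ℝ (Fin n)} (hx : ‖x‖ < 1) (hy : ‖y‖ < 1) {t : ℝ}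
    (h0 : 0 ≤ t) (h1 : t ≤ 1) : ‖(1 - t) • x + t • y‖ < 1 := by
  rw [← mem_ball_zero_iff] at *
  exact convex_ball _ _ hx hy (by linarith) h0 (by ring)

end Chart

namespace HypPolyhedron

variable {n : ℕ} (P : HypPolyhedron n)

theorem kleinMap_image_carrier :
    kleinMap '' P.carrier = {p | ‖p‖ < 1 ∧ ∀ k, height (P.e k) p ≤ 0} := by
  ext p
  constructor
  · rintro ⟨x, ⟨⟨hx, h0⟩, hk⟩, rfl⟩
    refine ⟨norm_kleinMap_lt_one (by linarith) h0, fun k => ?_⟩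
    have := hk k
    rw [mink_eq_mul_height _ _ h0.ne'] at this
    exact nonpos_of_mul_nonpos_right this h0
  · rintro ⟨hp, hk⟩
    obtain ⟨x, hx, rfl⟩ := exists_kleinMap_eq hp
    refine ⟨x, ⟨hx, fun k => ?_⟩, rfl⟩
    rw [mink_eq_mul_height _ _ hx.2.ne']
    exact mul_nonpos_of_nonneg_of_nonpos hx.2.le (hk k)

theorem mem_cl_of_norm_lt_one {p : EuclideanSpace ℝ (Fin n)} (hp : ‖p‖ < 1)
    (h : ∀ k, height (P.e k) p ≤ 0) : p ∈ P.cl :=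
  subset_closure (by rw [kleinMap_image_carrier]; exact ⟨hp, h⟩)

theorem cl_subset : P.cl ⊆ {p | ‖p‖ ≤ 1 ∧ ∀ k, height (P.e k) p ≤ 0} := by
  refine closure_minimal ?_ ?_
  · rw [kleinMap_image_carrier]
    exact fun p hp => ⟨hp.1.le, hp.2⟩
  · simp only [Set.ofPred_and, Set.ofPred_forall]
    exact (isClosed_le continuous_norm continuous_const).inter
      (isClosed_iInter fun k => isClosed_le (continuous_height _) continuous_const)

theorem height_nonpos {p : EuclideanSpace ℝ (Fin n)} (hp : p ∈ P.cl) (k : Fin P.m) :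
    height (P.e k) p ≤ 0 :=
  (P.cl_subset hp).2 k

theorem convex_cl : Convex ℝ P.cl := by
  refine Convex.closure ?_
  rw [kleinMap_image_carrier]
  rintro x ⟨hx, hxk⟩ y ⟨hy, hyk⟩ a b ha hb hab
  obtain rfl : a = 1 - b := by linarith
  refine ⟨norm_combo_lt_one hx hy hb (by linarith), fun k => ?_⟩
  rw [height_combo]
  nlinarith [hxk k, hyk k]

end HypPolyhedron

section Faces

variable {n : ℕ}

theorem vectorSpan_le_ker {s : Set (EuclideanSpace ℝ (Fin n))}
    (l : StrongDual ℝ (EuclideanSpace ℝ (Fin n))) (h : ∀ a ∈ s, ∀ b ∈ s, l a = l b) :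
    vectorSpan ℝ s ≤ l.ker := by
  rw [vectorSpan_def, Submodule.span_le]
  rintro _ ⟨a, ha, b, hb, rfl⟩
  simp [h a ha b hb]

theorem vectorSpan_le_orthogonal {s : Set (EuclideanSpace ℝ (Fin n))} {e : Fin (n + 1) → ℝ}
    (h : ∀ a ∈ s, height e a = 0) : vectorSpan ℝ s ≤ (ℝ ∙ spatial e)ᗮ := by
  rw [vectorSpan_def, Submodule.span_le]
  rintro _ ⟨a, ha, b, hb, rfl⟩
  rw [SetLike.mem_coe, Submodule.mem_orthogonal_singleton_iff_inner_right]
  simp [height_sub_height, h a ha, h b hb]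

/-- A set of dimension `n - 1` in a hyperplane spans the direction of that hyperplane. -/
theorem vectorSpan_eq_orthogonal {s : Set (EuclideanSpace ℝ (Fin n))} {e : Fin (n + 1) → ℝ}
    (he : mink e e = 1) (h : ∀ a ∈ s, height e a = 0) (hs : sdim s = n - 1) :
    vectorSpan ℝ s = (ℝ ∙ spatial e)ᗮ := by
  refine Submodule.eq_of_le_of_finrank_eq (vectorSpan_le_orthogonal h) ?_
  have h1 := Submodule.finrank_add_finrank_orthogonal (ℝ ∙ spatial e)
  rw [finrank_span_singleton (spatial_ne_zero he), finrank_euclideanSpace_fin] at h1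
  rw [sdim] at hs
  omega

/-- If a segment from `z` in direction `d` starts inside `s`, then `d` lies in the vector span. -/
theorem mem_vectorSpan_of_eventually {s : Set (EuclideanSpace ℝ (Fin n))}
    {z d : EuclideanSpace ℝ (Fin n)} (hz : z ∈ s)
    (h : ∀ᶠ t : ℝ in nhds 0, z + t • d ∈ s) : d ∈ vectorSpan ℝ s := by
  obtain ⟨t, ht, ht0⟩ :=
    ((h.filter_mono (nhdsWithin_le_nhds (s := Set.Ioi 0))).and self_mem_nhdsWithin).exists
  have := vsub_mem_vectorSpan ℝ ht hz
  rw [vsub_eq_sub, add_sub_cancel_left] at this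
  simpa [smul_smul, inv_mul_cancel₀ (ne_of_gt ht0)] using
    Submodule.smul_mem _ (t⁻¹) this

theorem eventually_norm_lt_one {z : EuclideanSpace ℝ (Fin n)} (hz : ‖z‖ < 1)
    (d : EuclideanSpace ℝ (Fin n)) : ∀ᶠ t : ℝ in nhds 0, ‖z + t • d‖ < 1 := by
  have hc : Continuous fun t : ℝ => ‖z + t • d‖ := by fun_prop
  exact hc.continuousAt.eventually_lt_const (by simpa using hz)

theorem eventually_height_neg {e : Fin (n + 1) → ℝ} {z : EuclideanSpace ℝ (Fin n)}
    (hz : height e z < 0) (d : EuclideanSpace ℝ (Fin n)) :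
    ∀ᶠ t : ℝ in nhds 0, height e (z + t • d) < 0 := by
  have hc : Continuous fun t : ℝ => height e (z + t • d) := by fun_prop
  exact hc.continuousAt.eventually_lt_const (by simpa using hz)

end Faces

namespace HypPolyhedron

variable {n : ℕ} (P : HypPolyhedron n)

/-- Two bounding hyperplanes meeting `P̄` in a point `z` of the open ball at which every other
active constraint is implied by these two cut out an `(n - 2)`-face. -/
theorem inter_mem_faces {i k : Fin P.m} {z q : EuclideanSpace ℝ (Fin n)} (hz : ‖z‖ < 1)
    (hzi : height (P.e i) z = 0) (hzk : height (P.e k) z = 0)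
    (hqi : height (P.e i) q = 0) (hqk : 0 < height (P.e k) q)
    (hl : ∀ l, height (P.e l) z < 0 ∨
      ∀ p, height (P.e i) p = 0 → height (P.e k) p = 0 → height (P.e l) p = 0) :
    {p ∈ P.cl | height (P.e i) p = 0 ∧ height (P.e k) p = 0} ∈ P.faces (n - 2) := by
  set A := {p ∈ P.cl | height (P.e i) p = 0 ∧ height (P.e k) p = 0} with hA
  have hzcl : z ∈ P.cl := P.mem_cl_of_norm_lt_one hz fun l =>
    (hl l).elim le_of_lt fun h => (h z hzi hzk).le
  have hzA : z ∈ A := ⟨hzcl, hzi, hzk⟩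
  refine ⟨fun _ => ⟨innerSL ℝ (spatial (P.e i)) + innerSL ℝ (spatial (P.e k)), ?_⟩, ⟨z, hzA⟩, ?_⟩
  · ext p
    simp only [hA, Set.mem_ofPred_eq, add_apply, innerSL_apply_apply]
    refine and_congr_right fun hp => ⟨fun ⟨hi, hk⟩ y hy => ?_, fun h => ?_⟩
    · have := P.height_nonpos hy i
      have := P.height_nonpos hy k
      simp only [height] at *
      linarith
    · have := P.height_nonpos hp i
      have := P.height_nonpos hp k
      have := h z hzcl
      simp only [height] at *
      constructor <;> linarith
  · have hind : LinearIndependent ℝ ![spatial (P.e i), spatial (P.e k)] := by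
      rw [LinearIndependent.pair_iff]
      intro a b hab
      have h := congrArg (fun u => ⟪u, q - z⟫) hab
      simp only [inner_add_left, real_inner_smul_left, height_sub_height, hqi, hzi, hzk,
        inner_zero_left, sub_zero, mul_zero, zero_add] at h
      have hb : b = 0 := (mul_eq_zero.1 h).resolve_right hqk.ne'
      rw [hb, zero_smul, add_zero] at hab
      exact ⟨(smul_eq_zero.1 hab).resolve_right (spatial_ne_zero (P.unit i)), hb⟩
    set W := Submodule.span ℝ (Set.range ![spatial (P.e i), spatial (P.e k)]) with hW
    have hmem : ∀ d, d ∈ Wᗮ ↔ ⟪spatial (P.e i), d⟫ = 0 ∧ ⟪spatial (P.e k), d⟫ = 0 := by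
      intro d
      rw [hW, Matrix.range_cons_cons_empty, Submodule.span_insert, ← Submodule.inf_orthogonal,
        Submodule.mem_inf, Submodule.mem_orthogonal_singleton_iff_inner_right,
        Submodule.mem_orthogonal_singleton_iff_inner_right]
    have hspan : vectorSpan ℝ A = Wᗮ := by
      apply le_antisymm
      · intro d hd
        rw [hmem]
        exact ⟨Submodule.mem_orthogonal_singleton_iff_inner_right.1
            (vectorSpan_le_orthogonal (fun a ha => ha.2.1) hd),
          Submodule.mem_orthogonal_singleton_iff_inner_right.1
            (vectorSpan_le_orthogonal (fun a ha => ha.2.2) hd)⟩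
      · intro d hd
        rw [hmem] at hd
        refine mem_vectorSpan_of_eventually hzA ?_
        have hneg : ∀ᶠ t : ℝ in nhds 0, ∀ l, height (P.e l) z < 0 →
            height (P.e l) (z + t • d) < 0 :=
          Filter.eventually_all.2 fun l =>
            Filter.eventually_imp_distrib_left.2 fun h => eventually_height_neg h d
        filter_upwards [eventually_norm_lt_one hz d, hneg] with t ht htl
        have hi : height (P.e i) (z + t • d) = 0 := by
          rw [height_add, real_inner_smul_right, hd.1, hzi]; ring
        have hk : height (P.e k) (z + t • d) = 0 := by
          rw [height_add, real_inner_smul_right, hd.2, hzk]; ring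
        exact ⟨P.mem_cl_of_norm_lt_one ht fun l =>
          (hl l).elim (fun h => (htl l h).le) fun h => (h _ hi hk).le, hi, hk⟩
    have h1 := Submodule.finrank_add_finrank_orthogonal W
    rw [finrank_span_eq_card hind, finrank_euclideanSpace_fin, Fintype.card_fin] at h1
    rw [sdim, hspan]
    omega

/-- Orthogonal projection of a point of `P` beyond the hyperplane of `e i`, in the Klein chart. -/
theorem exists_projection {i j : Fin P.m} {y : EuclideanSpace ℝ (Fin n)} (hy : ‖y‖ < 1)
    (hyi : height (P.e i) y < 0) (hyj : height (P.e j) y = 0) (hyk : ∀ k, height (P.e k) y ≤ 0)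
    (hij : 0 < mink (P.e i) (P.e j)) :
    ∃ q, ‖q‖ < 1 ∧ height (P.e i) q = 0 ∧ 0 < height (P.e j) q ∧
      ∀ k, mink (P.e i) (P.e k) = 0 → height (P.e k) q ≤ 0 := by
  set c := height (P.e i) y with hc
  set x : Fin (n + 1) → ℝ := Fin.cons (1 - c * P.e i 0) fun r => y r - c * P.e i r.succ with hx
  have hs : spatial x = y - c • spatial (P.e i) := by
    ext r
    simp [spatial, hx]
  have hx0 : x 0 = 1 - c * P.e i 0 := rfl
  have hmink : ∀ k, mink (P.e k) x = height (P.e k) y - c * mink (P.e i) (P.e k) := by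
    intro k
    rw [mink_eq_inner_spatial, mink_eq_inner_spatial, hs, hx0, inner_sub_right,
      real_inner_smul_right, height, real_inner_comm (spatial (P.e i))]
    ring
  have hu := P.unit i
  rw [mink_eq_inner_spatial] at hu
  have hcy : c = ⟪spatial (P.e i), y⟫ - P.e i 0 := rfl
  have hyy : ‖y‖ ^ 2 < 1 := by nlinarith [norm_nonneg y]
  have htime : mink x x < 0 := by
    rw [mink_eq_inner_spatial, hs, hx0, inner_sub_right, inner_sub_left, inner_sub_left]
    simp only [real_inner_smul_left, real_inner_smul_right, real_inner_self_eq_norm_sq y,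
      real_inner_comm (spatial (P.e i)) y, sub_eq_iff_eq_add.1 hu, sub_eq_iff_eq_add.1 hcy.symm]
    nlinarith [sq_nonneg c]
  have hpos : 0 < x 0 := by
    have h1 : ⟪y, spatial x⟫ - x 0 < 0 := by
      rw [hs, hx0, inner_sub_right, real_inner_smul_right, real_inner_self_eq_norm_sq,
        real_inner_comm]
      nlinarith [sq_nonneg c]
    by_contra! hneg
    rw [mink_eq_inner_spatial, real_inner_self_eq_norm_sq] at htime
    have h2 := (abs_le.1 (abs_real_inner_le_norm y (spatial x))).1
    have h3 : ‖spatial x‖ < -x 0 := by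
      by_contra! h
      nlinarith
    nlinarith [norm_nonneg (spatial x), norm_nonneg y]
  have hheight : ∀ k, x 0 * height (P.e k) (kleinMap x) =
      height (P.e k) y - c * mink (P.e i) (P.e k) := fun k => by
    rw [← mink_eq_mul_height _ _ hpos.ne', hmink]
  refine ⟨kleinMap x, norm_kleinMap_lt_one htime hpos, ?_, ?_, fun k hk => ?_⟩
  · have := hheight i
    rw [P.unit i, mul_one, ← hc, sub_self] at this
    exact (mul_eq_zero.1 this).resolve_left hpos.ne'
  · have := hheight j
    refine pos_of_mul_pos_right (a := x 0) ?_ hpos.le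
    rw [this, hyj]
    nlinarith
  · have := hheight k
    rw [hk, mul_zero, sub_zero] at this
    exact nonpos_of_mul_nonpos_right (this ▸ hyk k) hpos

end HypPolyhedron

/-- Finitely many affine functions that do not vanish identically on an affine set `H` are
simultaneously nonzero at some point of `H` close to any given point of `H`. -/
theorem exists_forall_affine_ne_zero {n : ℕ} {ι : Type*} (S : Finset ι)
    {h : ι → EuclideanSpace ℝ (Fin n) → ℝ} (hcont : ∀ s, Continuous (h s))
    (haff : ∀ s x y (t : ℝ), h s ((1 - t) • x + t • y) = (1 - t) * h s x + t * h s y)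
    {H U : Set (EuclideanSpace ℝ (Fin n))}
    (hH : ∀ x ∈ H, ∀ y ∈ H, ∀ t : ℝ, (1 - t) • x + t • y ∈ H) (hU : IsOpen U)
    (hne : (U ∩ H).Nonempty) (hS : ∀ s ∈ S, ∃ p ∈ H, h s p ≠ 0) :
    ∃ x ∈ U ∩ H, ∀ s ∈ S, h s x ≠ 0 := by
  classical
  induction S using Finset.induction_on with
  | empty =>
    obtain ⟨x, hx⟩ := hne
    exact ⟨x, hx, by simp⟩
  | insert a S _ ih =>
    obtain ⟨x, hx, hxS⟩ := ih fun s hs => hS s (Finset.mem_insert_of_mem hs)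
    by_cases hax : h a x = 0
    · obtain ⟨p, hp, hap⟩ := hS a (Finset.mem_insert_self a S)
      have hc : Continuous fun t : ℝ => (1 - t) • x + t • p := by fun_prop
      have hUt : ∀ᶠ t : ℝ in nhds 0, (1 - t) • x + t • p ∈ U :=
        hc.continuousAt.eventually_mem (hU.mem_nhds (by simpa using hx.1))
      have hSt : ∀ᶠ t : ℝ in nhds 0, ∀ s ∈ S, h s ((1 - t) • x + t • p) ≠ 0 :=
        (Filter.eventually_all_finset S).2 fun s hs =>
          ((hcont s).comp hc).continuousAt.eventually_ne (by simpa using hxS s hs)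
      obtain ⟨t, ⟨ht, hts⟩, ht0⟩ := (((hUt.and hSt).filter_mono
        (nhdsWithin_le_nhds (s := Set.Ioi 0))).and self_mem_nhdsWithin).exists
      refine ⟨_, ⟨ht, hH x hx.2 p hp t⟩, fun s hs => ?_⟩
      rcases Finset.mem_insert.1 hs with rfl | hs
      · rw [haff, hax, mul_zero, zero_add]
        exact mul_ne_zero (ne_of_gt ht0) hap
      · exact hts s hs
    · refine ⟨x, hx, fun s hs => ?_⟩
      rcases Finset.mem_insert.1 hs with rfl | hs
      exacts [hax, hxS s hs]

namespace HypPolyhedron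

variable {n : ℕ} (P : HypPolyhedron n)

/-- In a right-angled polyhedron the outer normals of two facets never form an acute angle. -/
theorem IsRightAngled.mink_nonpos {P : HypPolyhedron n} (hra : P.IsRightAngled) {i j : Fin P.m}
    {x₀ y : EuclideanSpace ℝ (Fin n)} (hx₀ : ‖x₀‖ < 1) (hx₀i : height (P.e i) x₀ = 0)
    (hx₀l : ∀ l, height (P.e l) x₀ < 0 ∨ ∀ p, height (P.e i) p = 0 → height (P.e l) p = 0)
    (hy : ‖y‖ < 1) (hyi : height (P.e i) y < 0) (hyj : height (P.e j) y = 0)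
    (hyk : ∀ k, height (P.e k) y ≤ 0) : mink (P.e i) (P.e j) ≤ 0 := by
  by_contra! hij
  obtain ⟨q, hq, hqi, hqj, hqk⟩ := P.exists_projection hy hyi hyj hyk hij
  -- `h (k, l)` vanishes at `x` when the segment from `x` to `q` meets both zero loci at once.
  let h : Fin P.m × Fin P.m → EuclideanSpace ℝ (Fin n) → ℝ := fun s x =>
    height (P.e s.1) x * height (P.e s.2) q - height (P.e s.2) x * height (P.e s.1) q
  let H : Set (EuclideanSpace ℝ (Fin n)) := {x | height (P.e i) x = 0}
  let U : Set (EuclideanSpace ℝ (Fin n)) :=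
    {x | ‖x‖ < 1} ∩ ⋂ l, {x | height (P.e l) x₀ < 0 → height (P.e l) x < 0}
  have hU : IsOpen U := by
    refine (isOpen_lt continuous_norm continuous_const).inter (isOpen_iInter_of_finite fun l => ?_)
    by_cases hl : height (P.e l) x₀ < 0
    · simpa [hl] using isOpen_lt (continuous_height (P.e l)) continuous_const
    · simp [hl]
  obtain ⟨x, ⟨⟨hx, hxU⟩, hxi⟩, hxgen⟩ := exists_forall_affine_ne_zero
    (h := h) (H := H) (U := U) (Set.toFinite {s | ∃ p ∈ H, h s p ≠ 0}).toFinset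
    (fun s => by fun_prop) (fun s x y t => by simp only [h, height_combo]; ring)
    (fun x hx y hy t => by
      change height _ _ = 0
      rw [height_combo, show height (P.e i) x = 0 from hx, show height (P.e i) y = 0 from hy]
      ring)
    hU ⟨x₀, ⟨hx₀, Set.mem_iInter.2 fun l hl => hl⟩, hx₀i⟩ (by simp)
  change height (P.e i) x = 0 at hxi
  have hxneg : ∀ l, height (P.e l) x₀ < 0 → height (P.e l) x < 0 := Set.mem_iInter.1 hxU
  have hxnonpos : ∀ l, height (P.e l) x ≤ 0 := fun l =>
    (hx₀l l).elim (fun hl => (hxneg l hl).le) fun hl => (hl x hxi).le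
  have hxlt : ∀ l, 0 < height (P.e l) q → height (P.e l) x < 0 := fun l hl =>
    (hx₀l l).elim (hxneg l) fun h => absurd (h q hqi) hl.ne'
  let r : Fin P.m → ℝ := fun k => height (P.e k) x / (height (P.e k) x - height (P.e k) q)
  -- `k` is the constraint through which the segment from `x` to `q` leaves `P`.
  obtain ⟨k, hk, hkmin⟩ := Finset.exists_min_image
    (Finset.univ.filter fun k => 0 < height (P.e k) q) r ⟨j, by simpa using hqj⟩
  simp only [Finset.mem_filter, Finset.mem_univ, true_and] at hk hkmin
  have hden : ∀ l, 0 < height (P.e l) q → height (P.e l) x - height (P.e l) q < 0 := fun l hl => by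
    linarith [hxlt l hl]
  set s := r k with hs
  have hs0 : 0 ≤ s := div_nonneg_of_nonpos (hxlt k hk).le (hden k hk).le
  have hs1 : s < 1 := by
    rw [hs, div_lt_one_of_neg (hden k hk)]
    linarith
  set z := (1 - s) • x + s • q with hzdef
  have hzi : height (P.e i) z = 0 := by rw [hzdef, height_combo, hxi, hqi]; ring
  have hzk : height (P.e k) z = 0 := by
    have : s * (height (P.e k) x - height (P.e k) q) = height (P.e k) x :=
      div_mul_cancel₀ _ (hden k hk).ne
    rw [hzdef, height_combo]
    linarith
  have hznonpos : ∀ l, height (P.e l) z ≤ 0 := by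
    intro l
    rw [hzdef, height_combo]
    rcases le_or_gt (height (P.e l) q) 0 with hl | hl
    · nlinarith [hxnonpos l]
    · have := hkmin l hl
      rw [le_div_iff_of_neg (hden l hl)] at this
      linarith
  have hz : ‖z‖ < 1 := norm_combo_lt_one hx hq hs0 hs1.le
  have hzl : ∀ l, height (P.e l) z < 0 ∨
      ∀ p, height (P.e i) p = 0 → height (P.e k) p = 0 → height (P.e l) p = 0 := by
    intro l
    refine (hznonpos l).lt_or_eq.imp_right fun hl p hpi hpk => ?_
    have hvanish : h (k, l) x = 0 := by
      rw [hzdef, height_combo] at hl hzk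
      refine (mul_eq_zero.1 (?_ : (1 - s) * h (k, l) x = 0)).resolve_left (by linarith)
      simp only [h]
      linear_combination height (P.e l) q * hzk - height (P.e k) q * hl
    have hp : h (k, l) p = 0 := by
      by_contra hne
      exact hxgen (k, l) (by simpa using ⟨p, hpi, hne⟩) hvanish
    simp only [h, hpk, zero_mul, zero_sub, neg_eq_zero] at hp
    exact (mul_eq_zero.1 hp).resolve_right hk.ne'
  have hik : i ≠ k := by
    rintro rfl
    exact hk.ne' hqi
  have hinplane : ∀ (e : Fin (n + 1) → ℝ) (x : Fin (n + 1) → ℝ), x ∈ P.carrier →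
      height e (kleinMap x) = 0 → mink e x = 0 := fun e x hx h => by
    rw [mink_eq_mul_height _ _ hx.1.2.ne', h, mul_zero]
  have horth := hra i k hik ⟨_, P.inter_mem_faces hz hzi hzk hqi hk hzl,
    fun x hx hF => hinplane _ x hx hF.2.1, fun x hx hF => hinplane _ x hx hF.2.2⟩
  exact absurd (hqk k horth) hk.not_ge

/-- A facet lying in a bounding hyperplane is the whole intersection with that hyperplane. -/
theorem eq_of_mem_faces_of_height_eq_zero {F : Set (EuclideanSpace ℝ (Fin n))}
    (hF : F ∈ P.faces (n - 1)) {i : Fin P.m} (hi : ∀ p ∈ F, height (P.e i) p = 0) :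
    F = {p ∈ P.cl | height (P.e i) p = 0} := by
  obtain ⟨hexp, ⟨a, ha⟩, hdim⟩ := hF
  refine Set.Subset.antisymm (fun p hp => ⟨hexp.subset hp, hi p hp⟩) fun p ⟨hp, hpi⟩ => ?_
  obtain ⟨l, hl⟩ := hexp ⟨a, ha⟩
  have hconst : ∀ b ∈ F, ∀ c ∈ F, l b = l c := fun b hb c hc => by
    rw [hl] at hb hc
    exact le_antisymm (hc.2 b hb.1) (hb.2 c hc.1)
  have hmem : p - a ∈ l.ker := by
    refine vectorSpan_le_ker l hconst ?_
    rw [vectorSpan_eq_orthogonal (P.unit i) hi hdim,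
      Submodule.mem_orthogonal_singleton_iff_inner_right, height_sub_height, hpi, hi a ha, sub_zero]
  have hpa : l p = l a := by simpa [sub_eq_zero] using hmem
  rw [hl] at ha ⊢
  exact ⟨hp, fun y hy => hpa ▸ ha.2 y hy⟩

/-- Every facet lies in a bounding hyperplane and has a point of the open ball at which all
constraints that do not vanish on this hyperplane are strict. -/
theorem exists_bounding_index (hn : 2 ≤ n) {F : Set (EuclideanSpace ℝ (Fin n))}
    (hF : F ∈ P.faces (n - 1)) :
    ∃ (i : Fin P.m) (x : EuclideanSpace ℝ (Fin n)), x ∈ F ∧ ‖x‖ < 1 ∧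
      (∀ p ∈ F, height (P.e i) p = 0) ∧
      ∀ l, height (P.e l) x < 0 ∨ ∀ p, height (P.e i) p = 0 → height (P.e l) p = 0 := by
  obtain ⟨hexp, ⟨a, ha⟩, hdim⟩ := hF
  have hconv : Convex ℝ F := hexp.convex P.convex_cl
  have hmid : ∀ x ∈ F, ∀ y ∈ F, (1 - (1 / 2 : ℝ)) • x + (1 / 2 : ℝ) • y ∈ F := fun x hx y hy =>
    hconv hx hy (by norm_num) (by norm_num) (by norm_num)
  have hneg : ∀ {x}, x ∈ F → ∀ l, height (P.e l) x ≤ 0 := fun hx l =>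
    P.height_nonpos (hexp.subset hx) l
  have hstrict : ∀ S : Finset (Fin P.m), ∃ x ∈ F, ∀ l ∈ S,
      (∃ p ∈ F, height (P.e l) p < 0) → height (P.e l) x < 0 := by
    intro S
    induction S using Finset.induction_on with
    | empty => exact ⟨a, ha, by simp⟩
    | insert k S _ ih =>
      obtain ⟨x, hx, hxS⟩ := ih
      by_cases hk : ∃ p ∈ F, height (P.e k) p < 0
      · obtain ⟨p, hp, hpk⟩ := hk
        refine ⟨_, hmid x hx p hp, fun l hl hex => ?_⟩
        rw [height_combo]
        rcases Finset.mem_insert.1 hl with rfl | hl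
        · linarith [hneg hx l]
        · linarith [hxS l hl hex, hneg hp l]
      · refine ⟨x, hx, fun l hl hex => ?_⟩
        rcases Finset.mem_insert.1 hl with rfl | hl
        exacts [absurd hex hk, hxS l hl hex]
  obtain ⟨w, hw, hwl⟩ := hstrict Finset.univ
  obtain ⟨b, hb, hbw⟩ : ∃ b ∈ F, b ≠ w := by
    by_contra! hall
    have : F = {w} := Set.eq_singleton_iff_unique_mem.2 ⟨hw, hall⟩
    rw [this, sdim, vectorSpan_singleton, finrank_bot] at hdim
    omega
  set x := (1 - (1 / 2 : ℝ)) • w + (1 / 2 : ℝ) • b with hxdef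
  have hxF : x ∈ F := hmid w hw b hb
  have hx1 : ‖x‖ < 1 :=
    norm_combo_lt_of_ne (P.cl_subset (hexp.subset hw)).1 (P.cl_subset (hexp.subset hb)).1 hbw.symm
      (by norm_num) (by norm_num) (by norm_num)
  have hxl : ∀ l, height (P.e l) x < 0 ∨ ∀ p ∈ F, height (P.e l) p = 0 := by
    intro l
    by_cases hl : ∃ p ∈ F, height (P.e l) p < 0
    · left
      rw [hxdef, height_combo]
      linarith [hwl l (Finset.mem_univ l) hl, hneg hb l]
    · right
      push Not at hl
      exact fun p hp => le_antisymm (hneg hp l) (hl p hp)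
  obtain ⟨i, hi⟩ : ∃ i, ∀ p ∈ F, height (P.e i) p = 0 := by
    by_contra hnone
    have hall : ∀ l, height (P.e l) x < 0 := fun l =>
      (hxl l).resolve_right fun h => hnone ⟨l, h⟩
    obtain ⟨f, hf⟩ := hexp ⟨a, ha⟩
    have hcl : ∀ d, ∀ᶠ t : ℝ in nhds 0, x + t • d ∈ P.cl := fun d => by
      filter_upwards [eventually_norm_lt_one hx1 d,
        Filter.eventually_all.2 fun l => eventually_height_neg (hall l) d] with t ht htl
      exact P.mem_cl_of_norm_lt_one ht fun l => (htl l).le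
    have hmax : ∀ y ∈ P.cl, f y ≤ f x := by
      rw [hf] at hxF
      exact hxF.2
    have hfle : ∀ d, f d ≤ 0 := fun d => by
      obtain ⟨t, ht, ht0⟩ := (((hcl d).filter_mono
        (nhdsWithin_le_nhds (s := Set.Ioi 0))).and self_mem_nhdsWithin).exists
      have := hmax _ ht
      rw [map_add, map_smul, smul_eq_mul] at this
      exact nonpos_of_mul_nonpos_right (by linarith) ht0
    have hf0 : ∀ d, f d = 0 := fun d => le_antisymm (hfle d) (by simpa using hfle (-d))
    have htop : vectorSpan ℝ F = ⊤ := by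
      refine eq_top_iff.2 fun d _ => mem_vectorSpan_of_eventually hxF ?_
      filter_upwards [hcl d] with t ht
      rw [hf]
      exact ⟨ht, fun y _ => by rw [hf0, hf0]⟩
    rw [sdim, htop, finrank_top, finrank_euclideanSpace_fin] at hdim
    omega
  refine ⟨i, x, hxF, hx1, hi, fun l => (hxl l).imp_right fun hl p hp => ?_⟩
  have hmem : p - a ∈ (ℝ ∙ spatial (P.e l))ᗮ := by
    refine vectorSpan_le_orthogonal hl ?_
    rw [vectorSpan_eq_orthogonal (P.unit i) hi hdim,
      Submodule.mem_orthogonal_singleton_iff_inner_right, height_sub_height, hp, hi a ha, sub_zero]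
  rwa [Submodule.mem_orthogonal_singleton_iff_inner_right, height_sub_height, hl a ha,
    sub_zero] at hmem

end HypPolyhedron

/-- Nonzero vectors with pairwise nonpositive inner products number at most twice the dimension. -/
theorem card_le_two_mul_finrank_of_inner_nonpos (d : ℕ) {V : Type*} [NormedAddCommGroup V]
    [InnerProductSpace ℝ V] [FiniteDimensional ℝ V] (hd : Module.finrank ℝ V = d) {ι : Type*}
    (S : Finset ι) (u : ι → V) (hu : ∀ s ∈ S, u s ≠ 0)
    (hS : ∀ s ∈ S, ∀ t ∈ S, s ≠ t → ⟪u s, u t⟫ ≤ 0) : S.card ≤ 2 * d := by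
  classical
  induction d generalizing V S with
  | zero =>
    have := Module.finrank_zero_iff.1 hd
    rw [Finset.eq_empty_of_forall_notMem fun s hs => hu s hs (Subsingleton.elim _ _)]
    simp
  | succ d ih =>
    rcases S.eq_empty_or_nonempty with rfl | ⟨a, ha⟩
    · simp
    have hpos : 0 < ⟪u a, u a⟫ := real_inner_self_pos.2 (hu a ha)
    let W := (ℝ ∙ u a)ᗮ
    have hW : Module.finrank ℝ W = d := by
      have h1 := Submodule.finrank_add_finrank_orthogonal (ℝ ∙ u a)
      rw [finrank_span_singleton (hu a ha), hd] at h1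
      change 1 + Module.finrank ℝ W = _ at h1
      omega
    let c : ι → ℝ := fun s => ⟪u a, u s⟫ / ⟪u a, u a⟫
    have hc : ∀ s, c s * ⟪u a, u a⟫ = ⟪u a, u s⟫ := fun s => div_mul_cancel₀ _ hpos.ne'
    let u' : ι → W := fun s => ⟨u s - c s • u a, by
      rw [Submodule.mem_orthogonal_singleton_iff_inner_right, inner_sub_right,
        real_inner_smul_right, hc, sub_self]⟩
    have hinner : ∀ s t, ⟪u' s, u' t⟫ = ⟪u s, u t⟫ - c s * c t * ⟪u a, u a⟫ := fun s t => by
      change ⟪u s - c s • u a, u t - c t • u a⟫ = _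
      simp only [inner_sub_left, inner_sub_right, real_inner_smul_left, real_inner_smul_right,
        real_inner_comm (u a) (u s)]
      linear_combination c t * hc s + c s * hc t
    have hcle : ∀ s ∈ S.erase a, c s ≤ 0 := fun s hs =>
      div_nonpos_of_nonpos_of_nonneg
        (hS a ha s (Finset.mem_of_mem_erase hs) (Finset.ne_of_mem_erase hs).symm) hpos.le
    have hbound := ih hW ((S.erase a).filter fun s => u' s ≠ 0) u'
      (fun s hs => (Finset.mem_filter.1 hs).2) fun s hs t ht hst => by
        have hs' := (Finset.mem_filter.1 hs).1
        have ht' := (Finset.mem_filter.1 ht).1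
        have := hS s (Finset.mem_of_mem_erase hs') t (Finset.mem_of_mem_erase ht') hst
        have := mul_nonneg (mul_nonneg_of_nonpos_of_nonpos (hcle s hs') (hcle t ht')) hpos.le
        rw [hinner]
        linarith
    have hone : ((S.erase a).filter fun s => ¬ u' s ≠ 0).card ≤ 1 := by
      refine Finset.card_le_one.2 fun s hs t ht => ?_
      simp only [Finset.mem_filter, not_not] at hs ht
      by_contra hst
      have hmul : ∀ r ∈ S.erase a, u' r = 0 → c r < 0 := fun r hr h0 => by
        refine (hcle r hr).lt_of_ne fun hcr => hu r (Finset.mem_of_mem_erase hr) ?_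
        simpa [u', hcr] using congrArg Subtype.val h0
      have h1 := hinner s t
      rw [hs.2, inner_zero_left] at h1
      have h2 := hS s (Finset.mem_of_mem_erase hs.1) t (Finset.mem_of_mem_erase ht.1) hst
      have h3 := mul_pos (mul_pos_of_neg_of_neg (hmul s hs.1 hs.2) (hmul t ht.1 ht.2)) hpos
      linarith
    have h1 := Finset.card_filter_add_card_filter_not (s := S.erase a) fun s => u' s ≠ 0
    have h2 := Finset.card_erase_add_one ha
    omega

/-- At most `2(n - 1)` unit normals of pairwise non-acute hyperplanes share an ideal point. -/
theorem card_le_of_height_eq_zero_of_norm_eq_one {n : ℕ} {ι : Type*} (S : Finset ι)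
    (e : ι → Fin (n + 1) → ℝ) (hunit : ∀ s ∈ S, mink (e s) (e s) = 1)
    (hS : ∀ s ∈ S, ∀ t ∈ S, s ≠ t → mink (e s) (e t) ≤ 0)
    {v : EuclideanSpace ℝ (Fin n)} (hv : ‖v‖ = 1) (hev : ∀ s ∈ S, height (e s) v = 0) :
    S.card ≤ 2 * (n - 1) := by
  have hvv : ⟪v, v⟫ = 1 := by rw [real_inner_self_eq_norm_sq, hv, one_pow]
  have hv0 : v ≠ 0 := by
    rintro rfl
    simp at hv
  have hdim : Module.finrank ℝ (ℝ ∙ v)ᗮ = n - 1 := by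
    have h1 := Submodule.finrank_add_finrank_orthogonal (ℝ ∙ v)
    rw [finrank_span_singleton hv0, finrank_euclideanSpace_fin] at h1
    omega
  let u : ι → (ℝ ∙ v)ᗮ := fun s => ⟨spatial (e s) - ⟪v, spatial (e s)⟫ • v, by
    rw [Submodule.mem_orthogonal_singleton_iff_inner_right, inner_sub_right,
      real_inner_smul_right, hvv, mul_one, sub_self]⟩
  have hinner : ∀ s ∈ S, ∀ t ∈ S, ⟪u s, u t⟫ = mink (e s) (e t) := fun s hs t ht => by
    have h1 := hev s hs
    have h2 := hev t ht
    rw [height, real_inner_comm, sub_eq_zero] at h1 h2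
    change ⟪spatial (e s) - ⟪v, spatial (e s)⟫ • v, spatial (e t) - ⟪v, spatial (e t)⟫ • v⟫ = _
    simp only [inner_sub_left, inner_sub_right, real_inner_smul_left, real_inner_smul_right,
      hvv, mink_eq_inner_spatial, real_inner_comm v (spatial (e s)), h1, h2]
    ring
  refine card_le_two_mul_finrank_of_inner_nonpos _ hdim S u (fun s hs h0 => ?_)
    fun s hs t ht hst => (hinner s hs t ht).trans_le (hS s hs t ht hst)
  have := hinner s hs s hs
  rw [h0, inner_zero_left, hunit s hs] at this
  exact zero_ne_one this

/-- Double counting of ideal vertices: if `v\'_∞(P)` is the minimal number of ideal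
vertices contained in a facet of `P`, then
`2(n-1) ⬝ v_∞(P) ≥ a_{n-1}(P) ⬝ v\'_∞(P)`. -/
theorem ideal_vertices_vs_facets (n : ℕ) (hn : 2 ≤ n) (P : HypPolyhedron n)
    (hfv : P.FiniteVolume) (hra : P.IsRightAngled) (hnc : ¬ P.IsCompactPoly) :
    P.a (n - 1) * sInf {m | ∃ F ∈ P.faces (n - 1), (P.idealVerts ∩ F).ncard = m}
      ≤ 2 * (n - 1) * P.vInf := by
  classical
  have hvfin : P.idealVerts.Finite := hfv.1.subset fun v hv => hv.1
  rcases (P.faces (n - 1)).eq_empty_or_nonempty with hempty | ⟨F₀, hF₀⟩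
  · simp [HypPolyhedron.a, hempty]
  have : Nonempty (Fin P.m) := ⟨(P.exists_bounding_index hn hF₀).choose⟩
  choose! i x hxF hx1 hi hxl using fun F (hF : F ∈ P.faces (n - 1)) => P.exists_bounding_index hn hF
  have heq : ∀ F ∈ P.faces (n - 1), F = {p ∈ P.cl | height (P.e (i F)) p = 0} := fun F hF =>
    P.eq_of_mem_faces_of_height_eq_zero hF (hi F hF)
  have hinj : Set.InjOn i (P.faces (n - 1)) := fun F hF G hG hFG => by
    rw [heq F hF, heq G hG, hFG]
  have hffin : (P.faces (n - 1)).Finite :=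
    Set.Finite.of_finite_image (Set.toFinite (i '' P.faces (n - 1))) hinj
  have hnonpos : ∀ F ∈ P.faces (n - 1), ∀ G ∈ P.faces (n - 1), F ≠ G →
      mink (P.e (i F)) (P.e (i G)) ≤ 0 := fun F hF G hG hFG => by
    rcases hxl G hG (i F) with hneg | hzero
    · exact hra.mink_nonpos (hx1 F hF) (hi F hF _ (hxF F hF)) (hxl F hF) (hx1 G hG) hneg
        (hi G hG _ (hxF G hG)) fun k => P.height_nonpos (hG.1.subset (hxF G hG)) k
    · refine absurd ?_ hFG
      rw [heq F hF]
      exact (P.eq_of_mem_faces_of_height_eq_zero hG fun p hp => hzero p (hi G hG p hp)).symm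
  have hcount : ∀ v ∈ hvfin.toFinset, (hffin.toFinset.filter fun F => v ∈ F).card ≤ 2 * (n - 1) :=
    fun v hv => by
      refine card_le_of_height_eq_zero_of_norm_eq_one _ (fun F => P.e (i F))
        (fun F _ => P.unit _) (fun F hF G hG hFG => ?_) (hvfin.mem_toFinset.1 hv).2 fun F hF => ?_
      · simp only [Finset.mem_filter, Set.Finite.mem_toFinset] at hF hG
        exact hnonpos F hF.1 G hG.1 hFG
      · simp only [Finset.mem_filter, Set.Finite.mem_toFinset] at hF
        exact hi F hF.1 v hF.2
  have hncard : ∀ F ∈ hffin.toFinset,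
      sInf {m | ∃ F ∈ P.faces (n - 1), (P.idealVerts ∩ F).ncard = m} ≤
        (hvfin.toFinset.filter fun v => v ∈ F).card := fun F hF => by
    refine Nat.sInf_le ⟨F, hffin.mem_toFinset.1 hF, ?_⟩
    rw [← Set.ncard_coe_finset]
    congr 1
    ext v
    simp
  rw [HypPolyhedron.a, HypPolyhedron.vInf, Set.ncard_eq_toFinset_card _ hffin,
    Set.ncard_eq_toFinset_card _ hvfin, mul_comm (2 * (n - 1))]
  calc _ ≤ ∑ F ∈ hffin.toFinset, (hvfin.toFinset.filter fun v => v ∈ F).card := by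
        simpa using Finset.card_nsmul_le_sum _ _ _ hncard
    _ = ∑ v ∈ hvfin.toFinset, (hffin.toFinset.filter fun F => v ∈ F).card :=
        (Finset.sum_card_bipartiteAbove_eq_sum_card_bipartiteBelow fun v F => v ∈ F).symm
    _ ≤ _ := by simpa using Finset.sum_le_card_nsmul _ _ _ hcount
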